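/- arXiv:2106.14044 — 2 statements merged into one kernel-verified Lean document; each statement's English description precedes it below -/
import Mathlib

section
/- Let p_i, p_j, p_k be distinct odd primes and M = p_i^2 p_j^2 p_k^2. Assume A ⊕ B = ℤ_M with |A| = |B| = p_i p_j p_k, that Φ_M | A, and that for every a ∈ A the set A ∩ Λ(a,D(M)) is M-fibered in at least one of the three directions. Suppose there exists a_0 ∈ A with a_0∗F_ν ⊆ A for all ν ∈ {i,j,k}. Then Λ(a_0,D(M)) ⊕ B = ℤ_M is also a tiling, and both A and B satisfy (T2). -/
open Polynomial

/-- The mask polynomial `A(X) = Σ_{a ∈ A} X^a` of a finite subset of `ZMod M`,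
using the representatives in `{0, …, M-1}`. -/
noncomputable def maskPoly (M : ℕ) (A : Finset (ZMod M)) : Polynomial ℤ :=
  ∑ a ∈ A, X ^ a.val

/-- `Φ_s | A` : the `s`-th cyclotomic polynomial divides the mask polynomial of `A` in `ℤ[X]`. -/
def cycDvd (M s : ℕ) (A : Finset (ZMod M)) : Prop :=
  cyclotomic s ℤ ∣ maskPoly M A

/-- `A ⊕ B = ℤ_M` : every element of `ℤ_M` has a unique representation `a + b`
with `a ∈ A` and `b ∈ B`. -/
def IsTiling (M : ℕ) (A B : Set (ZMod M)) : Prop :=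
  ∀ z : ZMod M, ∃! ab : ZMod M × ZMod M, ab.1 ∈ A ∧ ab.2 ∈ B ∧ ab.1 + ab.2 = z

/-- The Coven–Meyerowitz property (T2): whenever `s_1, …, s_m` are prime powers dividing `M`,
powers of pairwise distinct primes, with `Φ_{s_t} | A` for each `t`, then `Φ_{s_1 ⋯ s_m} | A`. -/
def SatisfiesT2 (M : ℕ) (A : Finset (ZMod M)) : Prop :=
  ∀ (P : Finset ℕ) (e : ℕ → ℕ), P.Nonempty →
    (∀ p ∈ P, p.Prime ∧ 1 ≤ e p ∧ p ^ e p ∣ M ∧ cycDvd M (p ^ e p) A) →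
    cycDvd M (∏ p ∈ P, p ^ e p) A

/-- The `D`-grid through `x` in `ZMod M` : `Λ(x, D) = {y : D ∣ y - x}`. -/
def gridSet (M : ℕ) (x : ZMod M) (D : ℕ) : Set (ZMod M) :=
  {y : ZMod M | (D : ZMod M) ∣ (y - x)}

/-- `S` is fibered in the `p` direction on scale `M`: every element of `S` has its whole
fiber `Λ(s, M/p)` contained in `S`. -/
def Fibered (M p : ℕ) (S : Set (ZMod M)) : Prop :=
  ∀ s ∈ S, gridSet M s (M / p) ⊆ S

/-- `Div_N(S)` : the set of values `(s - s', N) = gcd(s - s', N)` for `s, s' ∈ S`. -/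
def DivSet (M N : ℕ) (S : Set (ZMod M)) : Set ℕ :=
  {m : ℕ | ∃ s ∈ S, ∃ s' ∈ S, Nat.gcd (s - s').val N = m}

/-!
Write `M = N ^ 2` with `N = p q r`, and let the grid of `a₀` be fibered in the direction `p`, with
`P`, `Q`, `R ≤ ℤ_M` the subgroups of order `p`, `q`, `r`, so that `P + Q + R = ⟨N⟩` is the subgroup
whose cosets are the grids. Then `A` contains both `a₀ + P + Q` and `a₀ + R`. A nonzero element of
`⟨N⟩` is a difference of a point of the first set and a point of the second, hence of two points of
`A`, so it is not a difference of two points of `B`; by counting `⟨N⟩ ⊕ B = ℤ_M`. Therefore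
`Φ_d ∣ B` for all `d ∣ N` with `d ≠ 1`, and since `|B| = N` is squarefree, `B` has no further
prime power cyclotomic divisors. This is (T2) for `B`.

For `A`, the same exclusion of differences forces every point with a `q`- or an `r`-fiber into the
grid of `a₀`, so `A` is `P`-periodic, which gives `Φ_{d²} ∣ A` whenever `p ∣ d`. The factors
`Φ_{q²}` and `Φ_{r²}` do not divide `B`, so they divide `A`. For `Φ_{q²r²}`, pass to `ℤ_M / P`,
where by Tijdeman's theorem `A` may be dilated by `p²`. If no character of order `q²r²` killed
`A`, every character nontrivial on both `Q` and `R` would kill the dilate's complement `B`, so the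
indicator function of `B` would have vanishing mixed differences in directions `x ∈ Q`, `y ∈ R`.
Then each `b ∈ B` would have `b + x ∈ B` or `b + y ∈ B`, although `x` and `y` are differences of
points of the dilate of `A`.
-/

section

open Finset AddSubgroup

section Complement

variable {G : Type*} [AddCommGroup G]

theorem eq_and_eq_of_isComplement {A B : Set G} (h : IsComplement A B) {a a' b b' : G}
    (ha : a ∈ A) (ha' : a' ∈ A) (hb : b ∈ B) (hb' : b' ∈ B) (hab : a + b = a' + b') :
    a = a' ∧ b = b' := by
  simpa using h.1 (a₁ := (⟨a, ha⟩, ⟨b, hb⟩)) (a₂ := (⟨a', ha'⟩, ⟨b', hb'⟩)) hab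

theorem isComplement_image_add_left {A B : Set G} (h : IsComplement A B) (x : G) :
    IsComplement ((x + ·) '' A) B := by
  refine ⟨?_, fun g ↦ ?_⟩
  · rintro ⟨⟨_, a, ha, rfl⟩, b, hb⟩ ⟨⟨_, a', ha', rfl⟩, b', hb'⟩ (hab : x + a + b = x + a' + b')
    obtain ⟨rfl, rfl⟩ := eq_and_eq_of_isComplement h ha ha' hb hb' (by simpa [add_assoc] using hab)
    rfl
  · obtain ⟨⟨⟨a, ha⟩, b⟩, hab : a + b = -x + g⟩ := h.2 (-x + g)
    exact ⟨(⟨x + a, a, ha, rfl⟩, b), by simp [add_assoc, hab]⟩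

theorem isComplement_image_add_left_iff {A B : Set G} {x : G} :
    IsComplement ((x + ·) '' A) B ↔ IsComplement A B := by
  refine ⟨fun h ↦ ?_, fun h ↦ isComplement_image_add_left h x⟩
  simpa only [Set.image_image, neg_add_cancel_left, Set.image_id'] using
    isComplement_image_add_left h (-x)

theorem isComplement_sup_of_add_mem [Finite G] {A B : Set G} (h : IsComplement A B)
    {H K : AddSubgroup G} {a₀ : G} (hH : ∀ x ∈ H, a₀ + x ∈ A) (hK : ∀ x ∈ K, a₀ + x ∈ A)
    (hcard : Nat.card ↥(H ⊔ K) * Nat.card B = Nat.card G) :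
    IsComplement ((H ⊔ K : AddSubgroup G) : Set G) B := by
  refine Function.Injective.bijective_of_nat_card_le ?_ (by rw [Nat.card_prod]; exact hcard.ge)
  rintro ⟨⟨l, hl⟩, b, hb⟩ ⟨⟨l', hl'⟩, b', hb'⟩ (hlb : l + b = l' + b')
  obtain ⟨x, hx, y, hy, hxy⟩ := mem_sup.1 (sub_mem hl' hl)
  have hb_eq : b' = b := (eq_and_eq_of_isComplement h (hH x hx) (hK (-y) (neg_mem hy)) hb' hb
    (by grind)).2
  simp_all

theorem add_mem_of_mem_sup {A : Set G} {P Q L : AddSubgroup G} {a₀ : G}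
    (hP : ∀ a ∈ A, a - a₀ ∈ L → ∀ x ∈ P, a + x ∈ A) (hQL : Q ≤ L) (hQ : ∀ x ∈ Q, a₀ + x ∈ A) :
    ∀ x ∈ P ⊔ Q, a₀ + x ∈ A := by
  intro x hx
  obtain ⟨y, hy, z, hz, rfl⟩ := mem_sup.1 hx
  have := hP _ (hQ z hz) (by simpa using hQL hz) y hy
  rwa [add_comm y, ← add_assoc]

theorem sub_mem_sup_of_add_mem {A B : Set G} (h : IsComplement A B) {H K : AddSubgroup G}
    (hHK : IsComplement ((H ⊔ K : AddSubgroup G) : Set G) B) {a₀ a : G}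
    (hH : ∀ x ∈ H, a₀ + x ∈ A) (hK : ∀ x ∈ K, a + x ∈ A) : a - a₀ ∈ H ⊔ K := by
  obtain ⟨b, hb⟩ := h.nonempty_right
  obtain ⟨⟨⟨l, hl⟩, b', hb'⟩, hlb : l + b' = a₀ - a + b⟩ := hHK.2 (a₀ - a + b)
  obtain ⟨x, hx, y, hy, rfl⟩ := mem_sup.1 hl
  have hxy : a₀ + -x = a + y := (eq_and_eq_of_isComplement h (hH (-x) (neg_mem hx)) (hK y hy) hb hb'
    (by grind)).1
  have : a - a₀ = -(x + y) := by grind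
  exact this ▸ neg_mem hl

theorem isComplement_sup_of_fibered [Finite G] {A B : Set G} (h : IsComplement A B)
    {P Q R : AddSubgroup G} {a₀ : G} (hP : ∀ a ∈ A, a - a₀ ∈ P ⊔ Q ⊔ R → ∀ x ∈ P, a + x ∈ A)
    (hQ : ∀ x ∈ Q, a₀ + x ∈ A) (hR : ∀ x ∈ R, a₀ + x ∈ A)
    (hcard : Nat.card ↥(P ⊔ Q ⊔ R) * Nat.card B = Nat.card G) :
    IsComplement ((P ⊔ Q ⊔ R : AddSubgroup G) : Set G) B :=
  isComplement_sup_of_add_mem h (add_mem_of_mem_sup hP (le_sup_right.trans le_sup_left) hQ) hR hcard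

theorem add_mem_of_fibered {A B : Set G} (h : IsComplement A B) {P Q R : AddSubgroup G} {a₀ : G}
    (hPQR : IsComplement ((P ⊔ Q ⊔ R : AddSubgroup G) : Set G) B)
    (hP : ∀ a ∈ A, a - a₀ ∈ P ⊔ Q ⊔ R → ∀ x ∈ P, a + x ∈ A)
    (hQ : ∀ x ∈ Q, a₀ + x ∈ A) (hR : ∀ x ∈ R, a₀ + x ∈ A)
    (hA : ∀ a ∈ A, (∀ x ∈ P, a + x ∈ A) ∨ (∀ x ∈ Q, a + x ∈ A) ∨ ∀ x ∈ R, a + x ∈ A) :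
    ∀ a ∈ A, ∀ x ∈ P, a + x ∈ A := by
  have hPRQ : P ⊔ Q ⊔ R = P ⊔ R ⊔ Q := sup_right_comm P Q R
  intro a ha
  rcases hA a ha with haP | haQ | haR
  · exact haP
  · refine hP a ha (hPRQ ▸ sub_mem_sup_of_add_mem h (hPRQ ▸ hPQR) ?_ haQ)
    exact add_mem_of_mem_sup hP le_sup_right hR
  · refine hP a ha (sub_mem_sup_of_add_mem h hPQR ?_ haR)
    exact add_mem_of_mem_sup hP (le_sup_right.trans le_sup_left) hQ

theorem sum_sum_add_of_isComplement [Fintype G] {R : Type*} [AddCommMonoid R] {A B : Finset G}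
    (h : IsComplement (A : Set G) (B : Set G)) (f : G → R) :
    ∑ a ∈ A, ∑ b ∈ B, f (a + b) = ∑ g, f g := by
  rw [← h.sum_comp, Fintype.sum_prod_type, ← Finset.sum_coe_sort A]
  exact Finset.sum_congr rfl fun a _ ↦ (Finset.sum_coe_sort B fun b ↦ f (a + b)).symm

theorem sum_single_pow_mul_sum_univ [Fintype G] {R : Type*} [CommSemiring R] (A : Finset G)
    (n : ℕ) : (∑ a ∈ A, AddMonoidAlgebra.single a (1 : R)) ^ n * ∑ x, AddMonoidAlgebra.single x 1 =
      (#A : R) ^ n • ∑ x, AddMonoidAlgebra.single x 1 := by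
  have htranslate (a : G) : AddMonoidAlgebra.single a (1 : R) * ∑ x, AddMonoidAlgebra.single x 1 =
      ∑ x, AddMonoidAlgebra.single x 1 := by
    simp only [mul_sum, AddMonoidAlgebra.single_mul_single, one_mul]
    exact Fintype.sum_equiv (Equiv.addLeft a) _ _ fun _ ↦ rfl
  induction n with
  | zero => simp
  | succ n ih =>
    rw [pow_succ, mul_assoc, sum_mul, sum_congr rfl fun a _ ↦ htranslate a, sum_const,
      ← Nat.cast_smul_eq_nsmul R, mul_smul_comm, ih, smul_smul, pow_succ']

theorem sum_single_pow_prime {p : ℕ} [Fact p.Prime] (A : Finset G) :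
    (∑ a ∈ A, AddMonoidAlgebra.single a (1 : ZMod p)) ^ p =
      ∑ a ∈ A, AddMonoidAlgebra.single (p • a) 1 := by
  have : CharP (AddMonoidAlgebra (ZMod p) G) p :=
    charP_of_injective_algebraMap (FaithfulSMul.algebraMap_injective (ZMod p) _) p
  simp [sum_pow_char, AddMonoidAlgebra.single_pow]

/-- Tijdeman's argument: in the group algebra over `𝔽_p` the Frobenius replaces `A` by `p • A`, and
all powers of `A` act on the sum of all group elements by scalars. -/
theorem natCast_card_filter_nsmul_add_eq_one [Finite G] [DecidableEq G] {A B : Finset G}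
    (h : IsComplement (A : Set G) (B : Set G)) {p : ℕ} (hp : p.Prime) (hpA : ¬ p ∣ #A) (g : G) :
    (#{x ∈ A ×ˢ B | p • x.1 + x.2 = g} : ZMod p) = 1 := by
  have := Fact.mk hp
  have := Fintype.ofFinite G
  let X (x : G) : AddMonoidAlgebra (ZMod p) G := .single x 1
  have hX (x y : G) : X x * X y = X (x + y) := by simp [X, AddMonoidAlgebra.single_mul_single]
  have hAB : (∑ a ∈ A, X a) * ∑ b ∈ B, X b = ∑ x, X x := by
    simp only [sum_mul_sum, hX, sum_sum_add_of_isComplement h X]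
  have hprod : (∑ a ∈ A, X (p • a)) * ∑ b ∈ B, X b = ∑ x, X x := by
    calc (∑ a ∈ A, X (p • a)) * ∑ b ∈ B, X b = (∑ a ∈ A, X a) ^ p * ∑ b ∈ B, X b := by
          rw [sum_single_pow_prime]
      _ = (∑ a ∈ A, X a) ^ (p - 1) * ∑ x, X x := by
          rw [← hAB, ← mul_assoc, ← pow_succ, Nat.sub_add_cancel hp.one_le]
      _ = (#A : ZMod p) ^ (p - 1) • ∑ x, X x := sum_single_pow_mul_sum_univ A (p - 1)
      _ = ∑ x, X x := by
          rw [ZMod.pow_card_sub_one_eq_one (by rwa [Ne, ZMod.natCast_eq_zero_iff]), one_smul]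
  have hcoeff := congrArg (fun f : AddMonoidAlgebra (ZMod p) G ↦ f.coeff g) hprod
  simp only [sum_mul_sum, hX, ← sum_product', X, AddMonoidAlgebra.coeff_sum,
    Finsupp.finsetSum_apply, AddMonoidAlgebra.coeff_single, Finsupp.single_apply] at hcoeff
  simpa [sum_boole] using hcoeff

theorem isComplement_image_prime_nsmul [Finite G] [DecidableEq G] {A B : Finset G}
    (h : IsComplement (A : Set G) (B : Set G)) {p : ℕ} (hp : p.Prime) (hpA : ¬ p ∣ #A) :
    IsComplement (A.image (p • ·) : Set G) (B : Set G) := by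
  have := Fact.mk hp
  refine Function.Surjective.bijective_of_nat_card_le (fun g ↦ ?_) ?_
  · have hpos : 0 < #{x ∈ A ×ˢ B | p • x.1 + x.2 = g} := Nat.pos_of_ne_zero fun h0 ↦ by
      simpa [h0] using natCast_card_filter_nsmul_add_eq_one h hp hpA g
    obtain ⟨⟨a, b⟩, hab⟩ := card_pos.1 hpos
    simp only [mem_filter, mem_product] at hab
    exact ⟨(⟨p • a, mod_cast mem_image_of_mem _ hab.1.1⟩, ⟨b, hab.1.2⟩), hab.2⟩
  · rw [Nat.card_prod, ← h.card_mul_card]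
    gcongr
    simpa using card_image_le

theorem card_image_nsmul_eq_card [DecidableEq G] {A B : Finset G} {k : ℕ}
    (h : IsComplement (A : Set G) (B : Set G))
    (hk : IsComplement (A.image (k • ·) : Set G) (B : Set G)) : #(A.image (k • ·)) = #A := by
  have hB : 0 < Nat.card (B : Set G) := by
    simpa using h.nonempty_right
  have hcard := hk.card_mul_card.trans h.card_mul_card.symm
  simpa using Nat.eq_of_mul_eq_mul_right hB hcard

theorem isComplement_image_nsmul_of_coprime [Finite G] [DecidableEq G] {A B : Finset G}
    (h : IsComplement (A : Set G) (B : Set G)) {k : ℕ} (hk : k.Coprime #A) :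
    IsComplement (A.image (k • ·) : Set G) (B : Set G) := by
  induction k using induction_on_primes with
  | zero =>
    obtain ⟨a, rfl⟩ := card_eq_one.1 (Nat.coprime_zero_left _ |>.1 hk)
    simp only [coe_singleton, isComplement_singleton_left] at h
    simp [h, isComplement_singleton_univ]
  | one => simpa
  | prime_mul p k hp ih =>
    have hkA := ih hk.coprime_mul_left
    have hpA : ¬ p ∣ #(A.image (k • ·)) := by
      rw [card_image_nsmul_eq_card h hkA]
      exact (Nat.Prime.coprime_iff_not_dvd hp).1 hk.coprime_mul_right
    simpa [Finset.image_image, Function.comp_def, mul_nsmul'] using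
      isComplement_image_prime_nsmul hkA hp hpA

section Quotient

variable (H : AddSubgroup G)

theorem isComplement_image_mk {A B : Set G} (h : IsComplement A B)
    (hA : ∀ a ∈ A, ∀ x ∈ H, a + x ∈ A) :
    IsComplement (((↑) : G → G ⧸ H) '' A) (((↑) : G → G ⧸ H) '' B) := by
  constructor
  · rintro ⟨⟨_, a, ha, rfl⟩, _, b, hb, rfl⟩ ⟨⟨_, a', ha', rfl⟩, _, b', hb', rfl⟩
      (hab : ((a + b : G) : G ⧸ H) = (a' + b' : G))
    have hx := QuotientAddGroup.eq.1 hab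
    obtain ⟨ha_eq, rfl⟩ := eq_and_eq_of_isComplement h (hA a ha _ hx) ha' hb hb' (by grind)
    have : (a : G ⧸ H) = a' := by simpa using hab
    simp [this]
  · intro q
    induction q using QuotientAddGroup.induction_on with | _ g
    obtain ⟨⟨⟨a, ha⟩, b, hb⟩, rfl⟩ := h.2 g
    exact ⟨(⟨a, a, ha, rfl⟩, ⟨b, b, hb, rfl⟩), rfl⟩

theorem sum_mk_eq_card_nsmul_sum_image [DecidableEq (G ⧸ H)] {R : Type*} [AddCommMonoid R]
    {A : Finset G} (hA : ∀ a ∈ A, ∀ x ∈ H, a + x ∈ A) (f : G ⧸ H → R) :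
    ∑ a ∈ A, f a = Nat.card H • ∑ c ∈ A.image ((↑) : G → G ⧸ H), f c := by
  rw [sum_comp f ((↑) : G → G ⧸ H), smul_sum]
  refine sum_congr rfl fun c hc ↦ ?_
  obtain ⟨a, ha, rfl⟩ := mem_image.1 hc
  have hfiber : (({a' ∈ A | (a' : G ⧸ H) = a} : Finset G) : Set G) = (a + ·) '' (H : Set G) := by
    ext a'
    have hmem : -a + a' ∈ H → a' ∈ A := fun hx ↦ by simpa using hA a ha _ hx
    rw [mem_coe, mem_filter, eq_comm (b := (a : G ⧸ H)), QuotientAddGroup.eq]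
    simpa using hmem
  rw [← Set.ncard_coe_finset, hfiber, Set.ncard_image_of_injective _ (add_right_injective a)]
  rfl

end Quotient

end Complement

section Fourier

theorem sum_eq_zero_of_forall_add_mem {G R : Type*} [AddGroup G] [Ring R] [IsDomain R]
    {A : Finset G} {g : G} (hA : ∀ a ∈ A, a + g ∈ A) {ψ : AddChar G R} (hψ : ψ g ≠ 1) :
    ∑ a ∈ A, ψ a = 0 := by
  have himage : A.map (addRightEmbedding g) = A :=
    eq_of_subset_of_card_le (by simpa [subset_iff] using hA) (card_map _).ge
  have hsum : ∑ a ∈ A, ψ a = (∑ a ∈ A, ψ a) * ψ g := by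
    conv_lhs => rw [← himage]
    simp [AddChar.map_add_eq_mul, sum_mul]
  have : (∑ a ∈ A, ψ a) * (ψ g - 1) = 0 := by rw [mul_sub, ← hsum, mul_one, sub_self]
  exact (mul_eq_zero.1 this).resolve_right (sub_ne_zero.2 hψ)

variable {G : Type*} [AddCommGroup G]

theorem add_notMem_of_isComplement_image {A B : Set G} {k : ℕ}
    (hk : IsComplement ((k • ·) '' A) B) {a₀ x : G} (hx0 : x ≠ 0)
    (hkx : k.Coprime (addOrderOf x)) (hx : ∀ n : ℕ, a₀ + n • x ∈ A) {b : G} (hb : b ∈ B) :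
    b + x ∉ B := by
  intro hbx
  obtain ⟨u, hu⟩ := exists_nsmul_eq_self_of_coprime hkx
  have ha₀ : a₀ ∈ A := by simpa using hx 0
  have := (eq_and_eq_of_isComplement hk (Set.mem_image_of_mem _ (hx u))
    (Set.mem_image_of_mem _ ha₀) hb hbx (by
      simp only [nsmul_add, smul_comm k u x, hu]; abel)).2
  exact hx0 (by simpa using this)

theorem sum_addChar_neg_mul_sum [Fintype G] [DecidableEq G] (S : Finset G) (g : G) :
    ∑ ψ : AddChar G ℂ, ψ (-g) * ∑ s ∈ S, ψ s = if g ∈ S then (Fintype.card G : ℂ) else 0 := by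
  simp_rw [mul_sum, ← AddChar.map_add_eq_mul]
  rw [sum_comm]
  simp [AddChar.sum_apply_eq_ite, neg_add_eq_zero]

variable [Finite G]

theorem sum_mul_sum_eq_zero_of_isComplement {R : Type*} [CommRing R] [IsDomain R]
    {A B : Finset G} (h : IsComplement (A : Set G) (B : Set G)) {ψ : AddChar G R} (hψ : ψ ≠ 0) :
    (∑ a ∈ A, ψ a) * ∑ b ∈ B, ψ b = 0 := by
  classical
  have := Fintype.ofFinite G
  simp only [sum_mul_sum, ← AddChar.map_add_eq_mul]
  rw [sum_sum_add_of_isComplement h ψ, AddChar.sum_eq_ite, if_neg hψ]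

theorem add_mem_or_add_mem_of_sum_eq_zero {S : Finset G} {x y : G}
    (hS : ∀ ψ : AddChar G ℂ, ψ x ≠ 1 → ψ y ≠ 1 → ∑ s ∈ S, ψ s = 0) {b : G} (hb : b ∈ S) :
    b + x ∈ S ∨ b + y ∈ S := by
  classical
  have := Fintype.ofFinite G
  have hterm (ψ : AddChar G ℂ) :
      (ψ (-(b + x + y)) - ψ (-(b + x)) - ψ (-(b + y)) + ψ (-b)) * ∑ s ∈ S, ψ s = 0 := by
    have hfactor : ψ (-(b + x + y)) - ψ (-(b + x)) - ψ (-(b + y)) + ψ (-b) =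
        ψ (-(b + x + y)) * ((1 - ψ x) * (1 - ψ y)) := by
      simp only [mul_sub, sub_mul, mul_one, one_mul, ← AddChar.map_add_eq_mul]
      abel_nf
    by_cases hx : ψ x = 1
    · rw [hfactor, hx, sub_self, zero_mul, mul_zero, zero_mul]
    by_cases hy : ψ y = 1
    · rw [hfactor, hy, sub_self, mul_zero, mul_zero, zero_mul]
    · rw [hS ψ hx hy, mul_zero]
  have hsum := Fintype.sum_eq_zero _ hterm
  simp only [add_mul, sub_mul, sum_add_distrib, sum_sub_distrib, sum_addChar_neg_mul_sum,
    if_pos hb] at hsum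
  have hcard : (Fintype.card G : ℂ) ≠ 0 := by simp
  by_contra! hxy
  simp only [hxy.1, hxy.2, if_false, sub_zero] at hsum
  split_ifs at hsum
  · exact hcard (by linear_combination hsum / 2)
  · exact hcard (by linear_combination hsum)

theorem exists_addChar_sum_nsmul_eq_zero {A B : Finset G}
    (h : IsComplement (A : Set G) (B : Set G)) {k : ℕ} (hkA : k.Coprime #A) {a₀ x y : G}
    (hx0 : x ≠ 0) (hy0 : y ≠ 0) (hkx : k.Coprime (addOrderOf x)) (hky : k.Coprime (addOrderOf y))
    (hx : ∀ n : ℕ, a₀ + n • x ∈ A) (hy : ∀ n : ℕ, a₀ + n • y ∈ A) :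
    ∃ ψ : AddChar G ℂ, ψ x ≠ 1 ∧ ψ y ≠ 1 ∧ ∑ a ∈ A, ψ (k • a) = 0 := by
  classical
  have hk := isComplement_image_nsmul_of_coprime h hkA
  have hinj : Set.InjOn (k • · : G → G) A := card_image_iff.1 (card_image_nsmul_eq_card h hk)
  by_contra! hψ
  obtain ⟨b, hb⟩ := h.nonempty_right
  have hB (ψ : AddChar G ℂ) (hψx : ψ x ≠ 1) (hψy : ψ y ≠ 1) : ∑ b ∈ B, ψ b = 0 := by
    have hψ0 : ψ ≠ 0 := by rintro rfl; exact hψx rfl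
    refine (mul_eq_zero.1 (sum_mul_sum_eq_zero_of_isComplement hk hψ0)).resolve_left ?_
    rw [sum_image hinj]
    exact hψ ψ hψx hψy
  rw [coe_image] at hk
  rcases add_mem_or_add_mem_of_sum_eq_zero hB hb with hbx | hby
  · exact add_notMem_of_isComplement_image hk hx0 hkx hx hb hbx
  · exact add_notMem_of_isComplement_image hk hy0 hky hy hb hby

theorem exists_addChar_sum_nsmul_eq_zero_of_periodic (H : AddSubgroup G) {A B : Finset G}
    (h : IsComplement (A : Set G) (B : Set G)) (hH : ∀ a ∈ A, ∀ z ∈ H, a + z ∈ A) {k : ℕ}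
    (hkA : k.Coprime (#A / Nat.card H)) {a₀ x y : G} (hx0 : x ∉ H) (hy0 : y ∉ H)
    (hkx : k.Coprime (addOrderOf x)) (hky : k.Coprime (addOrderOf y))
    (hx : ∀ n : ℕ, a₀ + n • x ∈ A) (hy : ∀ n : ℕ, a₀ + n • y ∈ A) :
    ∃ ψ : AddChar G ℂ, ψ x ≠ 1 ∧ ψ y ≠ 1 ∧ ∑ a ∈ A, ψ (k • a) = 0 := by
  classical
  have hcard : #A = Nat.card H * #(A.image ((↑) : G → G ⧸ H)) := by
    simpa only [sum_const, smul_eq_mul, mul_one] using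
      sum_mk_eq_card_nsmul_sum_image H hH fun _ ↦ (1 : ℕ)
  have hπ (z : G) : addOrderOf (z : G ⧸ H) ∣ addOrderOf z :=
    addOrderOf_map_dvd (QuotientAddGroup.mk' H) z
  have hmem {z : G} (hz : ∀ n : ℕ, a₀ + n • z ∈ A) (n : ℕ) :
      (a₀ : G ⧸ H) + n • (z : G ⧸ H) ∈ A.image ((↑) : G → G ⧸ H) :=
    mem_image_of_mem _ (hz n)
  obtain ⟨ψ, hψx, hψy, hψ⟩ := exists_addChar_sum_nsmul_eq_zero
    (A := A.image ((↑) : G → G ⧸ H)) (B := B.image ((↑) : G → G ⧸ H))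
    (by simpa only [coe_image] using isComplement_image_mk H h hH)
    (by rwa [hcard, Nat.mul_div_cancel_left _ Nat.card_pos] at hkA)
    (by rwa [Ne, QuotientAddGroup.eq_zero_iff]) (by rwa [Ne, QuotientAddGroup.eq_zero_iff])
    (hkx.of_dvd_right (hπ x)) (hky.of_dvd_right (hπ y)) (hmem hx) (hmem hy)
  refine ⟨ψ.compAddMonoidHom (QuotientAddGroup.mk' H), hψx, hψy, ?_⟩
  exact (sum_mk_eq_card_nsmul_sum_image H hH fun c ↦ ψ (k • c)).trans (by rw [hψ, smul_zero])

end Fourier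

section CyclicTilings

variable {M : ℕ}

theorem isTiling_iff_isComplement {A B : Set (ZMod M)} : IsTiling M A B ↔ IsComplement A B := by
  rw [isComplement_iff_existsUnique]
  refine forall_congr' fun z ↦ ⟨?_, ?_⟩
  · rintro ⟨⟨a, b⟩, ⟨ha, hb, hab⟩, huniq⟩
    refine ⟨(⟨a, ha⟩, ⟨b, hb⟩), hab, fun y hy ↦ ?_⟩
    simpa [Prod.ext_iff, Subtype.ext_iff] using huniq (y.1, y.2) ⟨y.1.2, y.2.2, hy⟩
  · rintro ⟨⟨⟨a, ha⟩, b, hb⟩, hab, huniq⟩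
    refine ⟨(a, b), ⟨ha, hb, hab⟩, fun y hy ↦ ?_⟩
    simpa [Prod.ext_iff] using huniq (⟨y.1, hy.1⟩, ⟨y.2, hy.2.1⟩) hy.2.2

theorem natCast_dvd_iff_mem_zmultiples {D : ℕ} {z : ZMod M} :
    (D : ZMod M) ∣ z ↔ z ∈ zmultiples (D : ZMod M) := by
  simp_rw [mem_zmultiples_iff, zsmul_eq_mul, dvd_def, eq_comm (a := z), mul_comm (D : ZMod M)]
  exact (ZMod.intCast_surjective (n := M)).exists

theorem gridSet_eq_image (x : ZMod M) (D : ℕ) :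
    gridSet M x D = (x + ·) '' (zmultiples (D : ZMod M) : Set (ZMod M)) := by
  ext y
  simp [gridSet, natCast_dvd_iff_mem_zmultiples, sub_eq_neg_add]

theorem gridSet_subset_iff {x : ZMod M} {D : ℕ} {S : Set (ZMod M)} :
    gridSet M x D ⊆ S ↔ ∀ y ∈ zmultiples (D : ZMod M), x + y ∈ S := by
  rw [gridSet_eq_image, Set.image_subset_iff]
  rfl

theorem Fibered.gridSet_subset {p D : ℕ} {S : Set (ZMod M)} {x a : ZMod M}
    (h : Fibered M p (S ∩ gridSet M x D)) (ha : a ∈ S) (hax : a - x ∈ zmultiples (D : ZMod M)) :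
    gridSet M a (M / p) ⊆ S :=
  (h a ⟨ha, natCast_dvd_iff_mem_zmultiples.2 hax⟩).trans Set.inter_subset_left

theorem isTiling_gridSet_iff {x : ZMod M} {D : ℕ} {B : Set (ZMod M)} :
    IsTiling M (gridSet M x D) B ↔
      IsComplement (zmultiples (D : ZMod M) : Set (ZMod M)) B := by
  rw [isTiling_iff_isComplement, gridSet_eq_image, isComplement_image_add_left_iff]

theorem zmultiples_natCast_sup {R : Type*} [AddGroupWithOne R] (a b : ℕ) :
    zmultiples (a : R) ⊔ zmultiples (b : R) = zmultiples ((a.gcd b : ℕ) : R) := by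
  have hmap (n : ℕ) : zmultiples (n : R) = (zmultiples (n : ℤ)).map (Int.castAddHom R) := by
    simp [AddMonoidHom.map_zmultiples]
  rw [hmap, hmap, hmap, ← AddSubgroup.map_sup, Int.zmultiples_sup, Int.gcd_natCast_natCast]

theorem natCast_mem_zmultiples_iff {a b : ℕ} (ha : a ∣ M) :
    (b : ZMod M) ∈ zmultiples (a : ZMod M) ↔ a ∣ b := by
  rw [← natCast_dvd_iff_mem_zmultiples]
  refine ⟨fun h ↦ ?_, Nat.cast_dvd_cast⟩
  have := map_dvd (ZMod.castHom ha (ZMod a)) h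
  simpa [ZMod.natCast_eq_zero_iff] using this

theorem addOrderOf_natCast_div [NeZero M] {d : ℕ} (hd : d ∣ M) :
    addOrderOf ((M / d : ℕ) : ZMod M) = d := by
  rw [ZMod.addOrderOf_coe _ (NeZero.ne M), Nat.gcd_eq_right (Nat.div_dvd_of_dvd hd),
    Nat.div_div_self hd (NeZero.ne M)]

end CyclicTilings

section Cyclotomic

variable {M : ℕ}

theorem addChar_natCast_eq_one_iff {s : ℕ} {ψ : AddChar (ZMod M) ℂ}
    (hψ : IsPrimitiveRoot (ψ 1) s) (n : ℕ) : ψ n = 1 ↔ s ∣ n := by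
  rw [← nsmul_one, AddChar.map_nsmul_eq_pow, hψ.pow_eq_one_iff_dvd]

theorem cycDvd_iff_aeval_eq_zero {s : ℕ} (hs : 0 < s) {S : Finset (ZMod M)} {ζ : ℂ}
    (hζ : IsPrimitiveRoot ζ s) : cycDvd M s S ↔ aeval ζ (maskPoly M S) = 0 := by
  rw [cycDvd, cyclotomic_eq_minpoly hζ hs, ← minpoly.isIntegrallyClosed_dvd_iff (hζ.isIntegral hs)]

theorem sq_dvd_card_of_cycDvd_pow {S : Finset (ZMod M)} {p m n : ℕ} (hp : p.Prime) (hm : m ≠ 0)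
    (hn : n ≠ 0) (hmn : m ≠ n) (hSm : cycDvd M (p ^ m) S) (hSn : cycDvd M (p ^ n) S) :
    p ^ 2 ∣ #S := by
  have := Fact.mk hp
  have hirr (k : ℕ) : Irreducible (cyclotomic (p ^ k) ℤ) :=
    cyclotomic.irreducible (pow_pos hp.pos k)
  have hcoprime : IsRelPrime (cyclotomic (p ^ m) ℤ) (cyclotomic (p ^ n) ℤ) := by
    refine (hirr m).isRelPrime_iff_not_dvd.2 fun hdvd ↦ hmn ?_
    have heq := eq_of_monic_of_associated (cyclotomic.monic _ _) (cyclotomic.monic _ _)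
      ((hirr m).associated_of_dvd (hirr n) hdvd)
    exact Nat.pow_right_injective hp.two_le (cyclotomic_injective heq)
  have heval : eval 1 (maskPoly M S) = (#S : ℤ) := by simp [maskPoly, eval_finsetSum]
  have hdvd := eval_dvd (x := 1) (hcoprime.mul_dvd hSm hSn)
  obtain ⟨m, rfl⟩ := Nat.exists_eq_succ_of_ne_zero hm
  obtain ⟨n, rfl⟩ := Nat.exists_eq_succ_of_ne_zero hn
  rw [heval, eval_mul, eval_one_cyclotomic_prime_pow, eval_one_cyclotomic_prime_pow, ← sq] at hdvd
  exact_mod_cast hdvd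

theorem satisfiesT2_of_forall_cycDvd_pow {S : Finset (ZMod M)} (hS : Squarefree #S) {ε : ℕ}
    (hε : ε ≠ 0) (hM : ∀ p, p.Prime → p ∣ M → p ∣ #S)
    (h : ∀ d, d ∣ #S → d ≠ 1 → cycDvd M (d ^ ε) S) : SatisfiesT2 M S := by
  intro P e hP hPe
  have hdvd (p) (hp : p ∈ P) : p ∣ #S :=
    hM p (hPe p hp).1 ((dvd_pow_self p (Nat.one_le_iff_ne_zero.1 (hPe p hp).2.1)).trans
      (hPe p hp).2.2.1)
  have he (p) (hp : p ∈ P) : e p = ε := by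
    obtain ⟨hprime, hep, -, hcyc⟩ := hPe p hp
    by_contra hne
    have hsq := sq_dvd_card_of_cycDvd_pow hprime (Nat.one_le_iff_ne_zero.1 hep) hε hne hcyc
      (h p (hdvd p hp) hprime.ne_one)
    exact hprime.not_isUnit (hS p (by rwa [← sq]))
  rw [prod_congr rfl fun p hp ↦ by rw [he p hp], prod_pow]
  refine h _ (prod_primes_dvd _ (fun p hp ↦ (hPe p hp).1.prime) hdvd) fun h1 ↦ ?_
  obtain ⟨p, hp⟩ := hP
  exact (hPe p hp).1.ne_one (Nat.dvd_one.1 (h1 ▸ dvd_prod_of_mem _ hp))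

variable [NeZero M]

theorem exists_addChar_isPrimitiveRoot {s : ℕ} (hs : s ∣ M) :
    ∃ ψ : AddChar (ZMod M) ℂ, IsPrimitiveRoot (ψ 1) s := by
  have hζ := Complex.isPrimitiveRoot_exp s (ne_zero_of_dvd_ne_zero (NeZero.ne M) hs)
  refine ⟨AddChar.zmodChar M ((hζ.pow_eq_one_iff_dvd M).2 hs), ?_⟩
  rwa [← Nat.cast_one (R := ZMod M), AddChar.zmodChar_apply', pow_one]

theorem aeval_addChar_maskPoly (ψ : AddChar (ZMod M) ℂ) (k : ℕ) (S : Finset (ZMod M)) :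
    aeval (ψ 1 ^ k) (maskPoly M S) = ∑ x ∈ S, ψ (k • x) := by
  simp only [maskPoly, map_sum, map_pow, aeval_X]
  refine sum_congr rfl fun x _ ↦ ?_
  rw [← pow_mul, ← AddChar.map_nsmul_eq_pow, mul_nsmul', nsmul_one, ZMod.natCast_zmod_val]

theorem cycDvd_iff_sum_eq_zero {s : ℕ} (hs : s ∣ M) {S : Finset (ZMod M)}
    {ψ : AddChar (ZMod M) ℂ} (hψ : IsPrimitiveRoot (ψ 1) s) :
    cycDvd M s S ↔ ∑ x ∈ S, ψ x = 0 := by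
  rw [cycDvd_iff_aeval_eq_zero (Nat.pos_of_dvd_of_pos hs (NeZero.pos M)) hψ]
  simpa using (aeval_addChar_maskPoly ψ 1 S).congr_left

theorem cycDvd_or_cycDvd_of_isComplement {A B : Finset (ZMod M)}
    (h : IsComplement (A : Set (ZMod M)) (B : Set (ZMod M))) {s : ℕ} (hs : s ∣ M) (hs1 : s ≠ 1) :
    cycDvd M s A ∨ cycDvd M s B := by
  obtain ⟨ψ, hψ⟩ := exists_addChar_isPrimitiveRoot hs
  have hψ0 : ψ ≠ 0 := by
    rintro rfl
    exact hs1 (hψ.unique .one)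
  rw [cycDvd_iff_sum_eq_zero hs hψ, cycDvd_iff_sum_eq_zero hs hψ]
  exact mul_eq_zero.1 (sum_mul_sum_eq_zero_of_isComplement h hψ0)

theorem cycDvd_of_add_mem {A : Finset (ZMod M)} {D s : ℕ} (hA : ∀ a ∈ A, a + D ∈ A) (hs : s ∣ M)
    (hsD : ¬ s ∣ D) : cycDvd M s A := by
  obtain ⟨ψ, hψ⟩ := exists_addChar_isPrimitiveRoot hs
  rw [cycDvd_iff_sum_eq_zero hs hψ]
  exact sum_eq_zero_of_forall_add_mem hA (by rwa [Ne, addChar_natCast_eq_one_iff hψ])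

theorem cycDvd_of_isComplement_zmultiples {B : Finset (ZMod M)} {D s : ℕ}
    (h : IsComplement (zmultiples (D : ZMod M) : Set (ZMod M)) (B : Set (ZMod M)))
    (hs : s ∣ M) (hsD : s ∣ D) (hs1 : s ≠ 1) : cycDvd M s B := by
  classical
  let L : Finset (ZMod M) := {z | z ∈ zmultiples (D : ZMod M)}
  refine (cycDvd_or_cycDvd_of_isComplement (A := L) (by simpa [L] using h) hs hs1).resolve_left ?_
  obtain ⟨ψ, hψ⟩ := exists_addChar_isPrimitiveRoot hs
  have hψL (z) (hz : z ∈ L) : ψ z = 1 := by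
    obtain ⟨n, rfl⟩ := mem_zmultiples_iff.1 (mem_filter.1 hz).2
    rw [AddChar.map_zsmul_eq_zpow, (addChar_natCast_eq_one_iff hψ D).2 hsD, one_zpow]
  rw [cycDvd_iff_sum_eq_zero hs hψ, sum_congr rfl hψL, sum_const, nsmul_one, Nat.cast_eq_zero]
  exact card_ne_zero_of_mem (a := 0) (by simp [L])

end Cyclotomic

section ThreePrimes

variable {M : ℕ}

theorem not_div_dvd_div {p q : ℕ} (hM : M ≠ 0) (hp : p.Prime) (hq : q.Prime) (hpq : p ≠ q)
    (hpM : p ∣ M) (hqM : q ∣ M) : ¬ M / p ∣ M / q := by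
  have hpos : 0 < M / p := Nat.div_pos (Nat.le_of_dvd (Nat.pos_of_ne_zero hM) hpM) hp.pos
  rw [Nat.dvd_div_iff_mul_dvd hqM]
  nth_rw 2 [← Nat.div_mul_cancel hpM]
  rw [mul_comm q, Nat.mul_dvd_mul_iff_left hpos, Nat.prime_dvd_prime_iff_eq hq hp]
  exact hpq.symm

theorem isPrimitiveRoot_addChar_pow {k m : ℕ} (hM : M = k * m) (hm : 0 < m)
    {ψ : AddChar (ZMod M) ℂ} (hψ : ∀ ℓ ∈ m.primeFactors, ψ ((M / ℓ : ℕ) : ZMod M) ≠ 1) :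
    IsPrimitiveRoot (ψ 1 ^ k) m := by
  have hpow (n : ℕ) : ψ 1 ^ n = ψ n := by rw [← AddChar.map_nsmul_eq_pow, nsmul_one]
  rw [IsPrimitiveRoot.iff_orderOf]
  refine orderOf_eq_of_pow_and_pow_div_prime hm ?_ fun ℓ hℓ hℓm ↦ ?_
  · rw [← pow_mul, ← hM, hpow, ZMod.natCast_self, AddChar.map_zero_eq_one]
  · rw [← pow_mul, ← Nat.mul_div_assoc _ hℓm, ← hM, hpow]
    exact hψ ℓ (Nat.mem_primeFactors.2 ⟨hℓ, hℓm, hm.ne'⟩)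

theorem zmultiples_sup_of_coprime {p q r N : ℕ} (hp : p ≠ 0) (hq : q ≠ 0) (hr : r ≠ 0)
    (hpq : p.Coprime q) (hpr : p.Coprime r) (hqr : q.Coprime r)
    (hN : N = p * q * r) (hM : M = N ^ 2) :
    zmultiples ((M / p : ℕ) : ZMod M) ⊔ zmultiples ((M / q : ℕ) : ZMod M) ⊔
      zmultiples ((M / r : ℕ) : ZMod M) = zmultiples (N : ZMod M) := by
  have hMp : M / p = N * (q * r) :=
    Nat.div_eq_of_eq_mul_left (Nat.pos_of_ne_zero hp) (by rw [hM, hN]; ring)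
  have hMq : M / q = N * (p * r) :=
    Nat.div_eq_of_eq_mul_left (Nat.pos_of_ne_zero hq) (by rw [hM, hN]; ring)
  have hMr : M / r = N * (p * q) :=
    Nat.div_eq_of_eq_mul_left (Nat.pos_of_ne_zero hr) (by rw [hM, hN]; ring)
  rw [zmultiples_natCast_sup, zmultiples_natCast_sup, hMp, hMq, hMr, Nat.gcd_mul_left,
    Nat.gcd_mul_right, hpq.symm.gcd_eq_one, one_mul, Nat.gcd_mul_left,
    (hpr.mul_left hqr).symm.gcd_eq_one, mul_one]

variable [NeZero M] {A B : Finset (ZMod M)}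

theorem cycDvd_of_fibers (h : IsComplement (A : Set (ZMod M)) (B : Set (ZMod M)))
    {p q r α m : ℕ} (hp : p.Prime) (hM : M = p ^ α * m) (hα : α ≠ 0) (hpm : p.Coprime m)
    (hm : m.primeFactors = {q, r})
    (hP : ∀ a ∈ A, ∀ z ∈ zmultiples ((M / p : ℕ) : ZMod M), a + z ∈ A) (hcard : p.Coprime (#A / p))
    {a₀ : ZMod M} (hQ : ∀ z ∈ zmultiples ((M / q : ℕ) : ZMod M), a₀ + z ∈ A)
    (hR : ∀ z ∈ zmultiples ((M / r : ℕ) : ZMod M), a₀ + z ∈ A) : cycDvd M m A := by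
  have hpM : p ∣ M := hM ▸ (dvd_pow_self p hα).mul_right m
  have hm0 : m ≠ 0 := right_ne_zero_of_mul (hM ▸ NeZero.ne M)
  have hprime {ℓ : ℕ} (hℓ : ℓ ∈ m.primeFactors) : ℓ.Prime ∧ ℓ ∣ M ∧ p ≠ ℓ :=
    ⟨Nat.prime_of_mem_primeFactors hℓ,
      (Nat.dvd_of_mem_primeFactors hℓ).trans ⟨_, hM.trans (mul_comm _ _)⟩,
      fun hpℓ ↦ hp.coprime_iff_not_dvd.1 hpm (hpℓ ▸ Nat.dvd_of_mem_primeFactors hℓ)⟩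
  have hcoprime {ℓ : ℕ} (hℓ : ℓ ∈ m.primeFactors) :
      (p ^ α).Coprime (addOrderOf ((M / ℓ : ℕ) : ZMod M)) := by
    rw [addOrderOf_natCast_div (hprime hℓ).2.1]
    exact ((Nat.coprime_primes hp (hprime hℓ).1).2 (hprime hℓ).2.2).pow_left α
  have hnotMem {ℓ : ℕ} (hℓ : ℓ ∈ m.primeFactors) :
      ((M / ℓ : ℕ) : ZMod M) ∉ zmultiples ((M / p : ℕ) : ZMod M) := by
    rw [natCast_mem_zmultiples_iff (Nat.div_dvd_of_dvd hpM)]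
    exact not_div_dvd_div (NeZero.ne M) hp (hprime hℓ).1 (hprime hℓ).2.2 hpM (hprime hℓ).2.1
  have hq : q ∈ m.primeFactors := by simp [hm]
  have hr : r ∈ m.primeFactors := by simp [hm]
  obtain ⟨ψ, hψq, hψr, hψ⟩ := exists_addChar_sum_nsmul_eq_zero_of_periodic _ h hP
    (by rw [Nat.card_zmultiples, addOrderOf_natCast_div hpM]; exact hcard.pow_left α)
    (hnotMem hq) (hnotMem hr) (hcoprime hq) (hcoprime hr)
    (fun n ↦ hQ _ (nsmul_mem (mem_zmultiples _) n)) (fun n ↦ hR _ (nsmul_mem (mem_zmultiples _) n))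
  have hζ := isPrimitiveRoot_addChar_pow hM (Nat.pos_of_ne_zero hm0) (ψ := ψ)
    (by simp [hm, hψq, hψr])
  rw [cycDvd_iff_aeval_eq_zero (Nat.pos_of_ne_zero hm0) hζ, aeval_addChar_maskPoly, hψ]

theorem cycDvd_prime_sq_of_isComplement (h : IsComplement (A : Set (ZMod M)) (B : Set (ZMod M)))
    {q : ℕ} (hq : q.Prime) (hqM : q ^ 2 ∣ M) (hB : cycDvd M q B) (hqB : ¬ q ^ 2 ∣ #B) :
    cycDvd M (q ^ 2) A :=
  (cycDvd_or_cycDvd_of_isComplement h hqM (hq.one_lt.ne' <| by simpa using ·)).resolve_right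
    fun hB2 ↦ hqB <| sq_dvd_card_of_cycDvd_pow hq one_ne_zero two_ne_zero (by simp)
      (by rwa [pow_one]) hB2

theorem card_eq_of_isComplement_of_sq {N : ℕ}
    (h : IsComplement (A : Set (ZMod M)) (B : Set (ZMod M))) (hM : M = N ^ 2)
    (hA : #A = N) : #B = N := by
  have hAB := h.card_mul_card
  simp only [Nat.card_coe_set_eq, Set.ncard_coe_finset, Nat.card_zmod, hA] at hAB
  have hN : 0 < N := Nat.pos_of_ne_zero (by rintro rfl; exact NeZero.ne M hM)
  exact Nat.eq_of_mul_eq_mul_left hN (by rw [hAB, hM, sq])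

variable {p q r N : ℕ}

theorem cycDvd_sq_of_fibers (h : IsComplement (A : Set (ZMod M)) (B : Set (ZMod M)))
    (hp : p.Prime) (hq : q.Prime) (hr : r.Prime) (hN : N = p * q * r) (hNsq : Squarefree N)
    (hM : M = N ^ 2) (hA : #A = N) (hB : #B = N) (hBcyc : ∀ d, d ∣ N → d ≠ 1 → cycDvd M d B)
    (hP : ∀ a ∈ A, ∀ z ∈ zmultiples ((M / p : ℕ) : ZMod M), a + z ∈ A)
    {a₀ : ZMod M} (hQ : ∀ z ∈ zmultiples ((M / q : ℕ) : ZMod M), a₀ + z ∈ A)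
    (hR : ∀ z ∈ zmultiples ((M / r : ℕ) : ZMod M), a₀ + z ∈ A)
    {d : ℕ} (hd : d ∣ N) (hd1 : d ≠ 1) : cycDvd M (d ^ 2) A := by
  have hpqr : p.Coprime (q * r) :=
    Nat.coprime_of_squarefree_mul (by rwa [← mul_assoc, ← hN])
  by_cases hpd : p ∣ d
  · refine cycDvd_of_add_mem (fun a ha ↦ hP a ha _ (mem_zmultiples _))
      (hM ▸ pow_dvd_pow_of_dvd hd 2) fun hdM ↦ ?_
    have hMp : M / p = p * (q * r) ^ 2 :=
      Nat.div_eq_of_eq_mul_left hp.pos (by rw [hM, hN]; ring)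
    have hp2 : p * p ∣ p * (q * r) ^ 2 := by
      rw [← sq, ← hMp]
      exact (pow_dvd_pow_of_dvd hpd 2).trans hdM
    exact hp.coprime_iff_not_dvd.1 hpqr (hp.dvd_of_dvd_pow (Nat.dvd_of_mul_dvd_mul_left hp.pos hp2))
  · have hprime {ℓ : ℕ} (hℓ : ℓ.Prime) (hℓN : ℓ ∣ N) : cycDvd M (ℓ ^ 2) A :=
      cycDvd_prime_sq_of_isComplement h hℓ (hM ▸ pow_dvd_pow_of_dvd hℓN 2)
        (hBcyc ℓ hℓN hℓ.ne_one) fun hℓB ↦ hℓ.not_isUnit (hNsq ℓ (by rwa [← sq, ← hB]))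
    have hdqr : d ∣ q * r :=
      ((hp.coprime_iff_not_dvd.2 hpd).symm).dvd_of_dvd_mul_left (by rwa [← mul_assoc, ← hN])
    obtain ⟨x, y, hx, hy, rfl⟩ := (Nat.dvd_mul).1 hdqr
    rcases (Nat.dvd_prime hq).1 hx with rfl | rfl <;> rcases (Nat.dvd_prime hr).1 hy with rfl | rfl
    · exact absurd rfl hd1
    · rw [one_mul] at hd ⊢; exact hprime hr hd
    · rw [mul_one] at hd ⊢; exact hprime hq hd
    · refine cycDvd_of_fibers h hp (α := 2) (by rw [hM, hN]; ring) two_ne_zero (hpqr.pow_right 2)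
        ?_ hP ?_ hQ hR
      · rw [Nat.primeFactors_pow _ two_ne_zero, Nat.primeFactors_mul hq.ne_zero hr.ne_zero,
          hq.primeFactors, hr.primeFactors]
        rfl
      · rwa [hA, hN, mul_assoc, Nat.mul_div_cancel_left _ hp.pos]

theorem isComplement_and_satisfiesT2_of_fibered
    (h : IsComplement (A : Set (ZMod M)) (B : Set (ZMod M)))
    (hp : p.Prime) (hq : q.Prime) (hr : r.Prime) (hpq : p ≠ q) (hpr : p ≠ r) (hqr : q ≠ r)
    (hN : N = p * q * r) (hM : M = N ^ 2) (hA : #A = N) {a₀ : ZMod M}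
    (hP : ∀ a ∈ A, a - a₀ ∈ zmultiples (N : ZMod M) →
      ∀ z ∈ zmultiples ((M / p : ℕ) : ZMod M), a + z ∈ A)
    (hQ : ∀ z ∈ zmultiples ((M / q : ℕ) : ZMod M), a₀ + z ∈ A)
    (hR : ∀ z ∈ zmultiples ((M / r : ℕ) : ZMod M), a₀ + z ∈ A)
    (hfib : ∀ a ∈ A, (∀ z ∈ zmultiples ((M / p : ℕ) : ZMod M), a + z ∈ A) ∨
      (∀ z ∈ zmultiples ((M / q : ℕ) : ZMod M), a + z ∈ A) ∨
      ∀ z ∈ zmultiples ((M / r : ℕ) : ZMod M), a + z ∈ A) :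
    IsComplement (zmultiples (N : ZMod M) : Set (ZMod M)) (B : Set (ZMod M)) ∧
      SatisfiesT2 M A ∧ SatisfiesT2 M B := by
  have hpq' := (Nat.coprime_primes hp hq).2 hpq
  have hpr' := (Nat.coprime_primes hp hr).2 hpr
  have hqr' := (Nat.coprime_primes hq hr).2 hqr
  have hB := card_eq_of_isComplement_of_sq h hM hA
  have hNsq : Squarefree N := by
    rw [hN, Nat.squarefree_mul (hpr'.mul_left hqr'), Nat.squarefree_mul hpq']
    exact ⟨⟨hp.prime.squarefree, hq.prime.squarefree⟩, hr.prime.squarefree⟩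
  have hNM : N ∣ M := hM ▸ dvd_pow_self N two_ne_zero
  have hdvd (ℓ : ℕ) (hℓ : ℓ.Prime) (hℓM : ℓ ∣ M) : ℓ ∣ N := hℓ.dvd_of_dvd_pow (hM ▸ hℓM)
  have hsup := zmultiples_sup_of_coprime hp.ne_zero hq.ne_zero hr.ne_zero hpq' hpr' hqr' hN hM
  rw [← hsup] at hP
  have hgrid := isComplement_sup_of_fibered h hP hQ hR (by
    rw [hsup, Nat.card_zmultiples, ZMod.addOrderOf_coe _ (NeZero.ne M), Nat.gcd_eq_right hNM]
    simp [hB, Nat.div_mul_cancel hNM])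
  have hper := add_mem_of_fibered h hgrid hP hQ hR hfib
  rw [hsup] at hgrid
  have hBcyc (d : ℕ) (hd : d ∣ N) (hd1 : d ≠ 1) : cycDvd M d B :=
    cycDvd_of_isComplement_zmultiples hgrid (hd.trans hNM) hd hd1
  refine ⟨hgrid, satisfiesT2_of_forall_cycDvd_pow (ε := 2) ?_ two_ne_zero ?_ ?_,
    satisfiesT2_of_forall_cycDvd_pow (ε := 1) ?_ one_ne_zero ?_ ?_⟩ <;> simp only [hA, hB, pow_one]
  · exact hNsq
  · exact hdvd
  · exact fun d ↦ cycDvd_sq_of_fibers h hp hq hr hN hNsq hM hA hB hBcyc hper hQ hR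
  · exact hNsq
  · exact hdvd
  · exact hBcyc

end ThreePrimes

theorem statement3_general {p q r : ℕ} (hp : p.Prime) (hq : q.Prime) (hr : r.Prime)
    (hpq : p ≠ q) (hpr : p ≠ r) (hqr : q ≠ r) {M : ℕ} (hM : M = p ^ 2 * q ^ 2 * r ^ 2)
    {A B : Finset (ZMod M)} (htile : IsTiling M (A : Set (ZMod M)) (B : Set (ZMod M)))
    (hcardA : #A = p * q * r) {a₀ : ZMod M}
    (hgrid : Fibered M p ((A : Set (ZMod M)) ∩ gridSet M a₀ (p * q * r)) ∨
      Fibered M q ((A : Set (ZMod M)) ∩ gridSet M a₀ (p * q * r)) ∨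
      Fibered M r ((A : Set (ZMod M)) ∩ gridSet M a₀ (p * q * r)))
    (hfib : ∀ a ∈ A, gridSet M a (M / p) ⊆ A ∨ gridSet M a (M / q) ⊆ A ∨ gridSet M a (M / r) ⊆ A)
    (ha₀p : gridSet M a₀ (M / p) ⊆ A) (ha₀q : gridSet M a₀ (M / q) ⊆ A)
    (ha₀r : gridSet M a₀ (M / r) ⊆ A) :
    IsTiling M (gridSet M a₀ (p * q * r)) B ∧ SatisfiesT2 M A ∧ SatisfiesT2 M B := by
  have : NeZero M := ⟨by simp [hM, hp.ne_zero, hq.ne_zero, hr.ne_zero]⟩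
  have hM' : M = (p * q * r) ^ 2 := by rw [hM]; ring
  rw [isTiling_iff_isComplement] at htile
  rw [isTiling_gridSet_iff]
  simp only [gridSet_subset_iff, mem_coe] at hfib ha₀p ha₀q ha₀r
  rcases hgrid with hgrid | hgrid | hgrid
  · exact isComplement_and_satisfiesT2_of_fibered htile hp hq hr hpq hpr hqr rfl hM' hcardA
      (fun a ha haN ↦ gridSet_subset_iff.1 (hgrid.gridSet_subset ha haN)) ha₀q ha₀r hfib
  · exact isComplement_and_satisfiesT2_of_fibered htile hq hp hr hpq.symm hqr hpr
      (by ring) hM' hcardA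
      (fun a ha haN ↦ gridSet_subset_iff.1 (hgrid.gridSet_subset ha haN)) ha₀p ha₀r
      fun a ha ↦ or_left_comm.1 (hfib a ha)
  · exact isComplement_and_satisfiesT2_of_fibered htile hr hp hq hpr.symm hqr.symm hpq
      (by ring) hM' hcardA
      (fun a ha haN ↦ gridSet_subset_iff.1 (hgrid.gridSet_subset ha haN)) ha₀p ha₀q
      fun a ha ↦ or_rotate.1 (or_rotate.1 (hfib a ha))

end

/-- Fibered grid case with a triply-fibered point: if `A ⊕ B = ℤ_M`,
`|A| = |B| = p_i p_j p_k`, `Φ_M | A`, every set `A ∩ Λ(a, D(M))` (`a ∈ A`) is `M`-fibered in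
at least one direction, and there exists `a₀ ∈ A` with `a₀∗F_ν ⊆ A` for all `ν ∈ {i,j,k}`,
then `Λ(a₀, D(M)) ⊕ B = ℤ_M` is also a tiling and both `A`, `B` satisfy (T2). -/
theorem statement3
    (pi pj pk : ℕ) (hpi : pi.Prime) (hpj : pj.Prime) (hpk : pk.Prime)
    (hoi : Odd pi) (hoj : Odd pj) (hok : Odd pk)
    (hij : pi ≠ pj) (hik : pi ≠ pk) (hjk : pj ≠ pk)
    (M : ℕ) (hM : M = pi ^ 2 * pj ^ 2 * pk ^ 2)
    (A B : Finset (ZMod M))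
    (htile : IsTiling M (A : Set (ZMod M)) (B : Set (ZMod M)))
    (hcardA : A.card = pi * pj * pk) (hcardB : B.card = pi * pj * pk)
    (hPhiM : cycDvd M M A)
    (hfib : ∀ a ∈ A,
      Fibered M pi ((A : Set (ZMod M)) ∩ gridSet M a (pi * pj * pk)) ∨
      Fibered M pj ((A : Set (ZMod M)) ∩ gridSet M a (pi * pj * pk)) ∨
      Fibered M pk ((A : Set (ZMod M)) ∩ gridSet M a (pi * pj * pk)))
    (a0 : ZMod M) (ha0 : a0 ∈ A)
    (hfi : gridSet M a0 (M / pi) ⊆ (A : Set (ZMod M)))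
    (hfj : gridSet M a0 (M / pj) ⊆ (A : Set (ZMod M)))
    (hfk : gridSet M a0 (M / pk) ⊆ (A : Set (ZMod M))) :
    IsTiling M (gridSet M a0 (pi * pj * pk)) (B : Set (ZMod M)) ∧
      SatisfiesT2 M A ∧ SatisfiesT2 M B := by
  exact statement3_general hpi hpj hpk hij hik hjk hM htile hcardA (hfib a0 ha0)
    (fun a ha ↦ (hfib a ha).imp (·.gridSet_subset ha (by simp))
      (Or.imp (·.gridSet_subset ha (by simp)) (·.gridSet_subset ha (by simp)))) hfi hfj hfk
end

section
/- Let M = p_i^{n_i} p_j^{n_j} p_k^{n_k} with p_i, p_j, p_k distinct primes, and let A ⊕ B = ℤ_M. Assume that no divisor m of M with D(M) | m and m ≠ M belongs to Div(B) (equivalently, every D(M)-grid contains at most one element of B). Suppose x ∈ ℤ_M and there exist a_i, a_j, a_k ∈ A with (x−a_i, M) = M/p_i, (x−a_j, M) = M/p_j, and (x−a_k, M) = M/p_k. Then x ∈ A. -/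
/-!
Dilating `A` by a unit of `ℤ_M` preserves the tiling (Tijdeman). Since two elements with the same
gcd with `M` differ by a unit factor, this forces `Div(A) ∩ Div(B) = {M}` (Sands). Dilating `A` by
`-1` instead lets us write `x - a = b - b'` with `a ∈ A` and `b, b' ∈ B`.

If some `p ^ (n - 1)`, where `p ^ n ∥ M`, failed to divide `x - a`, then subtracting the multiple
`x - a_p` of `M / p` would not change the gcd with `M`, so that `(a_p - a, M) = (b - b', M)`. By
Sands `a = a_p`, and then `p ^ (n - 1) ∣ M / p ∣ x - a`, a contradiction. Hence `D(M) ∣ b - b'`, and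
the hypothesis on `Div(B)` leaves only `b = b'`, that is, `x = a`.
-/

open Polynomial

section GroupAlgebra

/-- The element of the group algebra representing a finite family in `G` with multiplicities: the
group-algebra form of the mask polynomial. -/
noncomputable def maskElement (R : Type*) {G ι : Type*} [Semiring R] [Fintype ι] (f : ι → G) :
    AddMonoidAlgebra R G :=
  ∑ i, AddMonoidAlgebra.single (f i) 1

variable {R G ι κ : Type*} [Fintype ι] [Fintype κ]

theorem maskElement_mul [Semiring R] [Add G] (f : ι → G) (g : κ → G) :
    maskElement R f * maskElement R g = maskElement R fun t : ι × κ ↦ f t.1 + g t.2 := by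
  simp only [maskElement, Fintype.sum_mul_sum, Fintype.sum_prod_type,
    AddMonoidAlgebra.single_mul_single, one_mul]

theorem maskElement_comp_of_bijective [Semiring R] (f : κ → G) {e : ι → κ} (he : e.Bijective) :
    maskElement R (f ∘ e) = maskElement R f :=
  he.sum_comp fun k ↦ AddMonoidAlgebra.single (f k) 1

theorem maskElement_mul_maskElement_id [Semiring R] [AddGroup G] [Fintype G] (f : ι → G) :
    maskElement R f * maskElement R (id : G → G) = Fintype.card ι • maskElement R (id : G → G) := by
  have translate (a : G) :
      AddMonoidAlgebra.single a 1 * maskElement R (id : G → G) = maskElement R id := by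
    refine Eq.trans ?_ (maskElement_comp_of_bijective id (AddGroup.addLeft_bijective a))
    simp only [maskElement, Finset.mul_sum, AddMonoidAlgebra.single_mul_single, one_mul,
      Function.comp_apply, id_eq]
  rw [maskElement, Finset.sum_mul, Finset.sum_congr rfl fun i _ ↦ translate (f i),
    Finset.sum_const, Finset.card_univ]

theorem maskElement_pow_mul_maskElement_id [Semiring R] [AddGroup G] [Fintype G] (f : ι → G)
    (n : ℕ) :
    maskElement R f ^ n * maskElement R (id : G → G) =
      Fintype.card ι ^ n • maskElement R (id : G → G) := by
  induction n with
  | zero => rw [pow_zero, one_mul, pow_zero, one_smul]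
  | succ k ih =>
    rw [pow_succ, mul_assoc, maskElement_mul_maskElement_id, mul_smul_comm, ih, smul_smul,
      pow_succ']

theorem maskElement_pow_char [CommSemiring R] [AddCommMonoid G] (p : ℕ) [Fact p.Prime] [CharP R p]
    (f : ι → G) : maskElement R f ^ p = maskElement R fun i ↦ p • f i := by
  have : CharP (AddMonoidAlgebra R G) p := charP_of_injective_algebraMap (R := R)
    (AddMonoidAlgebra.single_right_injective (m := 0)) p
  simp only [maskElement, sum_pow_char, AddMonoidAlgebra.single_pow, one_pow]

theorem surjective_of_maskElement_eq_nsmul [Semiring R] [Fintype G] {f : ι → G} {n : ℕ}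
    (hn : (n : R) ≠ 0) (h : maskElement R f = n • maskElement R (id : G → G)) :
    f.Surjective := by
  classical
  intro z
  by_contra! hz
  have hcoeff := congrArg (fun w ↦ w.coeff z) h
  simp [maskElement, AddMonoidAlgebra.coeff_sum, Finsupp.finsetSum_apply, Finsupp.single_apply, hz,
    eq_comm, hn] at hcoeff

end GroupAlgebra

section Dilation

variable {G ι κ : Type*} [AddCommGroup G] [Finite ι] [Finite κ]

-- In characteristic `p`, dilating `f` by `p` raises its mask to the power `p`, and a tiling remains
-- a tiling because the full-group mask absorbs every factor up to the scalar `card ι ≠ 0`.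
theorem bijective_prime_nsmul_add {f : ι → G} {g : κ → G} {p : ℕ} (hp : p.Prime)
    (hcop : p.Coprime (Nat.card ι)) (h : Function.Bijective fun t : ι × κ ↦ f t.1 + g t.2) :
    Function.Bijective fun t : ι × κ ↦ p • f t.1 + g t.2 := by
  have : Fact p.Prime := ⟨hp⟩
  have : Finite G := Finite.of_surjective _ h.2
  cases nonempty_fintype G
  cases nonempty_fintype ι
  cases nonempty_fintype κ
  rw [Nat.card_eq_fintype_card] at hcop
  have htile : maskElement (ZMod p) f * maskElement (ZMod p) g = maskElement (ZMod p) id := by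
    rw [maskElement_mul]
    exact maskElement_comp_of_bijective id h
  have hdilate : (maskElement (ZMod p) fun t : ι × κ ↦ p • f t.1 + g t.2) =
      Fintype.card ι ^ (p - 1) • maskElement (ZMod p) (id : G → G) := by
    rw [← maskElement_mul (fun i ↦ p • f i), ← maskElement_pow_char,
      ← pow_sub_one_mul hp.ne_zero, mul_assoc, htile, maskElement_pow_mul_maskElement_id]
  have hcard : ((Fintype.card ι ^ (p - 1) : ℕ) : ZMod p) ≠ 0 := by
    rw [Ne, ZMod.natCast_eq_zero_iff]
    exact fun hdvd ↦ (hp.coprime_iff_not_dvd.1 hcop) (hp.dvd_of_dvd_pow hdvd)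
  exact (Fintype.bijective_iff_surjective_and_card _).2
    ⟨surjective_of_maskElement_eq_nsmul hcard hdilate, Fintype.card_of_bijective h⟩

/-- Tijdeman's theorem. -/
theorem bijective_nsmul_add {f : ι → G} {g : κ → G} {n : ℕ} (hcop : n.Coprime (Nat.card ι))
    (h : Function.Bijective fun t : ι × κ ↦ f t.1 + g t.2) :
    Function.Bijective fun t : ι × κ ↦ n • f t.1 + g t.2 := by
  induction n using Nat.recOnMul generalizing f with
  | zero =>
    obtain ⟨i, hi⟩ := Nat.card_eq_one_iff_exists.1 ((Nat.coprime_zero_left _).1 hcop)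
    convert (AddGroup.addLeft_bijective (-f i)).comp h using 2 with t
    simp only [hi t.1, Function.comp_apply, zero_smul, zero_add, neg_add_cancel_left]
  | one => simpa only [one_smul] using h
  | prime p hp => exact bijective_prime_nsmul_add hp hcop h
  | mul a b iha ihb =>
    simpa only [mul_smul] using
      iha (f := fun i ↦ b • f i) (Nat.Coprime.coprime_mul_right hcop)
        (ihb (Nat.Coprime.coprime_mul_left hcop) h)

end Dilation

section ZMod

variable {M : ℕ} [NeZero M]

theorem natCast_dvd_iff_dvd_val {d : ℕ} (hd : d ∣ M) (u : ZMod M) :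
    (d : ZMod M) ∣ u ↔ d ∣ u.val := by
  refine ⟨?_, fun h ↦ ?_⟩
  · rintro ⟨v, rfl⟩
    rw [← ZMod.natCast_zmod_val v, ← Nat.cast_mul, ZMod.val_natCast, Nat.dvd_mod_iff hd]
    exact dvd_mul_right d v.val
  · rw [← ZMod.natCast_zmod_val u]
    exact Nat.cast_dvd_cast h

theorem gcd_val_dvd_gcd_val_iff {u v : ZMod M} :
    u.val.gcd M ∣ v.val.gcd M ↔ ∀ d : ℕ, d ∣ M → (d : ZMod M) ∣ u → (d : ZMod M) ∣ v := by
  refine ⟨fun h d hd hu ↦ ?_, fun h ↦ ?_⟩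
  · rw [natCast_dvd_iff_dvd_val hd] at hu ⊢
    exact ((Nat.dvd_gcd hu hd).trans h).trans (Nat.gcd_dvd_left _ _)
  · have hd := Nat.gcd_dvd_right u.val M
    refine Nat.dvd_gcd ?_ hd
    rw [← natCast_dvd_iff_dvd_val hd]
    exact h _ hd ((natCast_dvd_iff_dvd_val hd u).2 (Nat.gcd_dvd_left _ _))

theorem associated_gcd_val (u : ZMod M) : Associated ((u.val.gcd M : ℕ) : ZMod M) u := by
  obtain ⟨d, hd, r, hr, rfl⟩ := ZMod.eq_unit_mul_divisor u
  have hgcd : (r * d).val.gcd M = d := by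
    refine Nat.dvd_antisymm ?_ (Nat.dvd_gcd ?_ hd)
    · have he := Nat.gcd_dvd_right (r * d).val M
      rw [← Nat.dvd_mod_iff he, ← ZMod.val_natCast, ← natCast_dvd_iff_dvd_val he,
        ← hr.dvd_mul_left, natCast_dvd_iff_dvd_val he]
      exact Nat.gcd_dvd_left _ _
    · rw [← natCast_dvd_iff_dvd_val hd]
      exact dvd_mul_left _ _
  rw [hgcd]
  exact (associated_unit_mul_left _ r hr).symm

theorem exists_unit_mul_eq_of_gcd_val_eq {u v : ZMod M} (h : u.val.gcd M = v.val.gcd M) :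
    ∃ r : (ZMod M)ˣ, r * u = v := by
  have : Associated u v := (associated_gcd_val u).symm.trans (h ▸ associated_gcd_val v)
  obtain ⟨r, hr⟩ := this
  exact ⟨r, mul_comm (r : ZMod M) u ▸ hr⟩

theorem eq_zero_of_gcd_val_eq {u : ZMod M} (h : u.val.gcd M = M) : u = 0 :=
  (ZMod.val_eq_zero u).1 <|
    Nat.eq_zero_of_dvd_of_lt (Nat.gcd_eq_right_iff_dvd.1 h) u.val_lt

end ZMod

section GridModulus

/-- The modulus `D(M) = ∏ p_i ^ (n_i - 1)` of the grids, for `M = ∏ p_i ^ n_i`. -/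
def gridModulus (M : ℕ) : ℕ :=
  M.factorization.prod fun p n ↦ p ^ (n - 1)

theorem gridModulus_prime_pow {p : ℕ} (hp : p.Prime) (n : ℕ) :
    gridModulus (p ^ n) = p ^ (n - 1) := by
  rw [gridModulus, hp.factorization_pow, Finsupp.prod_single_index (by rw [Nat.zero_sub, pow_zero])]

theorem gridModulus_mul {m n : ℕ} (h : m.Coprime n) :
    gridModulus (m * n) = gridModulus m * gridModulus n := by
  rw [gridModulus, Nat.factorization_mul_of_coprime h,
    Finsupp.prod_add_index_of_disjoint h.disjoint_primeFactors]
  rfl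

theorem gridModulus_prime_pow_mul_three {p q r : ℕ} (hp : p.Prime) (hq : q.Prime) (hr : r.Prime)
    (hpq : p ≠ q) (hpr : p ≠ r) (hqr : q ≠ r) (k l m : ℕ) :
    gridModulus (p ^ k * q ^ l * r ^ m) = p ^ (k - 1) * q ^ (l - 1) * r ^ (m - 1) := by
  have hcop_pr := ((Nat.coprime_primes hp hr).2 hpr).pow k m
  have hcop_qr := ((Nat.coprime_primes hq hr).2 hqr).pow l m
  rw [gridModulus_mul (hcop_pr.mul_left hcop_qr),
    gridModulus_mul (((Nat.coprime_primes hp hq).2 hpq).pow k l), gridModulus_prime_pow hp,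
    gridModulus_prime_pow hq, gridModulus_prime_pow hr]

theorem gridModulus_dvd_iff {M d : ℕ} :
    gridModulus M ∣ d ↔ ∀ p ∈ M.primeFactors, p ^ (M.factorization p - 1) ∣ d := by
  refine ⟨fun h p hp ↦ (Finset.dvd_prod_of_mem _ hp).trans h,
    Finset.prod_dvd_of_isRelPrime fun p hp q hq hpq ↦ ?_⟩
  exact Nat.coprime_iff_isRelPrime.1 <| Nat.Coprime.pow _ _ <|
    (Nat.coprime_primes (Nat.prime_of_mem_primeFactors hp) (Nat.prime_of_mem_primeFactors hq)).2 hpq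

theorem gridModulus_dvd (M : ℕ) : gridModulus M ∣ M :=
  gridModulus_dvd_iff.2 fun p _ ↦
    (pow_dvd_pow p (Nat.sub_le _ 1)).trans (Nat.ordProj_dvd M p)

theorem pow_factorization_sub_one_dvd_div {M p : ℕ} (hp : p ∈ M.primeFactors) :
    p ^ (M.factorization p - 1) ∣ M / p := by
  have hdvd := Nat.dvd_of_mem_primeFactors hp
  have hpos : 0 < M.factorization p := Nat.pos_of_ne_zero (Finsupp.mem_support_iff.1 hp)
  rw [Nat.dvd_div_iff_mul_dvd hdvd, mul_pow_sub_one hpos.ne']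
  exact Nat.ordProj_dvd M p

theorem dvd_div_or_pow_factorization_dvd {M d p : ℕ} (hp : p ∈ M.primeFactors) (hd : d ∣ M) :
    d ∣ M / p ∨ p ^ M.factorization p ∣ d := by
  have hprime := Nat.prime_of_mem_primeFactors hp
  obtain ⟨m, hm⟩ := hd
  by_cases hpm : p ∣ m
  · left
    rw [Nat.dvd_div_iff_mul_dvd (Nat.dvd_of_mem_primeFactors hp), mul_comm, hm]
    exact mul_dvd_mul_left d hpm
  · right
    have hcop : (p ^ M.factorization p).Coprime m :=
      ((hprime.coprime_iff_not_dvd).2 hpm).pow_left _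
    exact hcop.dvd_of_dvd_mul_right (hm ▸ Nat.ordProj_dvd M p)

theorem gcd_val_sub_eq_of_not_pow_dvd {M p : ℕ} [NeZero M] (hp : p ∈ M.primeFactors)
    {u t : ZMod M} (ht : ((M / p : ℕ) : ZMod M) ∣ t)
    (hu : ¬ ((p ^ (M.factorization p - 1) : ℕ) : ZMod M) ∣ u) :
    (u - t).val.gcd M = u.val.gcd M := by
  have key {v s : ZMod M} (hs : ((M / p : ℕ) : ZMod M) ∣ s)
      (hv : ¬ ((p ^ (M.factorization p - 1) : ℕ) : ZMod M) ∣ v) :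
      v.val.gcd M ∣ (v - s).val.gcd M := by
    refine gcd_val_dvd_gcd_val_iff.2 fun d hd hdv ↦ dvd_sub hdv ?_
    obtain hdiv | hpow := dvd_div_or_pow_factorization_dvd hp hd
    · exact (Nat.cast_dvd_cast hdiv).trans hs
    · exact absurd ((Nat.cast_dvd_cast ((pow_dvd_pow p (Nat.sub_le _ 1)).trans hpow)).trans hdv) hv
  have hpt := (Nat.cast_dvd_cast (α := ZMod M) (pow_factorization_sub_one_dvd_div hp)).trans ht
  refine Nat.dvd_antisymm ?_ (key ht hu)
  simpa only [sub_neg_eq_add, sub_add_cancel] using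
    key (dvd_neg.2 ht) (mt (dvd_sub_left hpt).1 hu)

end GridModulus

namespace IsTiling

variable {M : ℕ} {A B : Set (ZMod M)}

theorem bijective_add (h : IsTiling M A B) :
    Function.Bijective fun t : A × B ↦ (t.1 : ZMod M) + t.2 := by
  refine (Function.bijective_iff_existsUnique _).2 fun z ↦ ?_
  obtain ⟨⟨a, b⟩, ⟨ha, hb, hab⟩, huniq⟩ := h z
  refine ⟨(⟨a, ha⟩, ⟨b, hb⟩), hab, fun ⟨a', b'⟩ hab' ↦ ?_⟩
  have heq := huniq (a', b') ⟨a'.2, b'.2, hab'⟩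
  exact Prod.ext (Subtype.ext (congrArg Prod.fst heq)) (Subtype.ext (congrArg Prod.snd heq))

variable [NeZero M]

theorem bijective_unit_mul_add (h : IsTiling M A B) (r : (ZMod M)ˣ) :
    Function.Bijective fun t : A × B ↦ (r : ZMod M) * t.1 + t.2 := by
  have hcard : Nat.card A * Nat.card B = M := by
    rw [← Nat.card_prod, Nat.card_eq_of_bijective _ h.bijective_add, Nat.card_zmod]
  simpa only [nsmul_eq_mul, ZMod.natCast_zmod_val] using
    bijective_nsmul_add ((ZMod.val_coe_unit_coprime r).coprime_dvd_right (Dvd.intro _ hcard))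
      h.bijective_add

/-- Sands's theorem: `Div(A) ∩ Div(B) = {M}`. -/
theorem eq_of_gcd_val_sub_eq (h : IsTiling M A B) {a a' b b' : ZMod M} (ha : a ∈ A) (ha' : a' ∈ A)
    (hb : b ∈ B) (hb' : b' ∈ B) (hgcd : (a - a').val.gcd M = (b - b').val.gcd M) : a = a' := by
  obtain ⟨r, hr⟩ := exists_unit_mul_eq_of_gcd_val_eq hgcd
  have hcollide : (r : ZMod M) * a + b' = r * a' + b := by linear_combination hr
  have heq := (h.bijective_unit_mul_add r).1 (a₁ := (⟨a, ha⟩, ⟨b', hb'⟩))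
    (a₂ := (⟨a', ha'⟩, ⟨b, hb⟩)) hcollide
  exact congrArg (fun t : A × B ↦ (t.1 : ZMod M)) heq

theorem exists_sub_eq_sub (h : IsTiling M A B) (x b : ZMod M) :
    ∃ a ∈ A, ∃ b' ∈ B, x - a = b - b' := by
  obtain ⟨⟨⟨a, ha⟩, ⟨b', hb'⟩⟩, hab⟩ := (h.bijective_unit_mul_add (-1)).2 (b - x)
  refine ⟨a, ha, b', hb', ?_⟩
  have hab : -a + b' = b - x := by simpa using hab
  linear_combination hab

theorem pow_factorization_sub_one_dvd_sub (h : IsTiling M A B) {p : ℕ} (hp : p ∈ M.primeFactors)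
    {x a a' b b' : ZMod M} (ha : a ∈ A) (ha' : a' ∈ A) (hb : b ∈ B) (hb' : b' ∈ B)
    (hx : x - a = b - b') (hfiber : ((M / p : ℕ) : ZMod M) ∣ x - a') :
    ((p ^ (M.factorization p - 1) : ℕ) : ZMod M) ∣ x - a := by
  by_contra hndvd
  have hgcd : (a' - a).val.gcd M = (b - b').val.gcd M := by
    rw [← hx, ← gcd_val_sub_eq_of_not_pow_dvd hp hfiber hndvd, sub_sub_sub_cancel_left]
  obtain rfl := h.eq_of_gcd_val_sub_eq ha' ha hb hb' hgcd
  exact hndvd ((Nat.cast_dvd_cast (pow_factorization_sub_one_dvd_div hp)).trans hfiber)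

end IsTiling

theorem eq_or_eq_or_eq_of_mem_primeFactors_mul_three {p q r s : ℕ} (hp : p.Prime) (hq : q.Prime)
    (hr : r.Prime) {k l m : ℕ} (hs : s ∈ (p ^ k * q ^ l * r ^ m).primeFactors) :
    s = p ∨ s = q ∨ s = r := by
  have hsprime := Nat.prime_of_mem_primeFactors hs
  have base {t n : ℕ} (ht : t.Prime) (hdvd : s ∣ t ^ n) : s = t :=
    (Nat.prime_dvd_prime_iff_eq hsprime ht).1 (hsprime.dvd_of_dvd_pow hdvd)
  obtain hpq | hdvd := hsprime.dvd_mul.1 (Nat.dvd_of_mem_primeFactors hs)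
  · exact (hsprime.dvd_mul.1 hpq).imp (base hp) fun hdvd ↦ .inl (base hq hdvd)
  · exact .inr (.inr (base hr hdvd))

theorem statement7_general {M : ℕ} [NeZero M] {A B : Set (ZMod M)} (htile : IsTiling M A B)
    (hdiv : ∀ m : ℕ, gridModulus M ∣ m → m ∣ M → m ≠ M → m ∉ DivSet M M B) {x : ZMod M}
    (hx : ∀ p ∈ M.primeFactors, ∃ a ∈ A, (x - a).val.gcd M = M / p) : x ∈ A := by
  obtain ⟨⟨_, b⟩, ⟨_, hb, _⟩, _⟩ := htile 0
  obtain ⟨a, ha, b', hb', hab⟩ := htile.exists_sub_eq_sub x b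
  have hdvd : gridModulus M ∣ (x - a).val := gridModulus_dvd_iff.2 fun p hp ↦ by
    obtain ⟨a', ha', hgcd⟩ := hx p hp
    have hfiber : ((M / p : ℕ) : ZMod M) ∣ x - a' := hgcd ▸ (associated_gcd_val (x - a')).dvd
    rw [← natCast_dvd_iff_dvd_val
      ((pow_dvd_pow p (Nat.sub_le _ 1)).trans (Nat.ordProj_dvd M p))]
    exact htile.pow_factorization_sub_one_dvd_sub hp ha ha' hb hb' hab hfiber
  have hgcd : (x - a).val.gcd M = M := by
    by_contra hne
    exact hdiv _ (Nat.dvd_gcd hdvd (gridModulus_dvd M)) (Nat.gcd_dvd_right _ _) hne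
      ⟨b, hb, b', hb', by rw [hab]⟩
  exact sub_eq_zero.1 (eq_zero_of_gcd_val_eq hgcd) ▸ ha

/-- **No missing joints.** Let `M = p_i^{n_i} p_j^{n_j} p_k^{n_k}` and
`A ⊕ B = ℤ_M`. Assume no divisor `m` of `M` with `D(M) | m`, `m ≠ M`, lies in `Div(B)`.
If `x ∈ ℤ_M` admits `a_i, a_j, a_k ∈ A` with `(x - a_ν, M) = M/p_ν`, then `x ∈ A`. -/
theorem statement7
    (pi pj pk : ℕ) (hpi : pi.Prime) (hpj : pj.Prime) (hpk : pk.Prime)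
    (hij : pi ≠ pj) (hik : pi ≠ pk) (hjk : pj ≠ pk)
    (ni nj nk : ℕ) (hni : 1 ≤ ni) (hnj : 1 ≤ nj) (hnk : 1 ≤ nk)
    (M : ℕ) (hM : M = pi ^ ni * pj ^ nj * pk ^ nk)
    (A B : Set (ZMod M)) (htile : IsTiling M A B)
    (hdiv : ∀ m : ℕ, (pi ^ (ni - 1) * pj ^ (nj - 1) * pk ^ (nk - 1)) ∣ m → m ∣ M → m ≠ M →
      m ∉ DivSet M M B)
    (x : ZMod M) (ai aj ak : ZMod M)
    (hai : ai ∈ A) (haj : aj ∈ A) (hak : ak ∈ A)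
    (hgi : Nat.gcd (x - ai).val M = M / pi)
    (hgj : Nat.gcd (x - aj).val M = M / pj)
    (hgk : Nat.gcd (x - ak).val M = M / pk) :
    x ∈ A := by
  have : NeZero M := ⟨by simp [hM, hpi.ne_zero, hpj.ne_zero, hpk.ne_zero]⟩
  have hD : gridModulus M = pi ^ (ni - 1) * pj ^ (nj - 1) * pk ^ (nk - 1) := by
    rw [hM, gridModulus_prime_pow_mul_three hpi hpj hpk hij hik hjk]
  refine statement7_general htile (hD ▸ hdiv) fun p hp ↦ ?_
  obtain rfl | rfl | rfl := eq_or_eq_or_eq_of_mem_primeFactors_mul_three hpi hpj hpk (hM ▸ hp)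
  exacts [⟨ai, hai, hgi⟩, ⟨aj, haj, hgj⟩, ⟨ak, hak, hgk⟩]
end
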